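/- Let $n\ge 1$ and $W=W^{n+1,n}=\{(x,y)\in\mathbb R^{n+1}\times\mathbb R^n : x_1\le y_1\le x_2\le\dots\le y_n\le x_{n+1}\}$. For $t>0$ let $\varphi_t(y)=(2\pi t)^{-1/2}e^{-y^2/(2t)}$, $\Phi_t(y)=\int_{-\infty}^y\varphi_t(z)\,dz$, $\varphi_t'(y)=-y(2\pi t^3)^{-1/2}e^{-y^2/(2t)}$, and let $q^n_t((x,y),(x',y'))$ be the determinant of the $(2n+1)\times(2n+1)$ block matrix $\begin{pmatrix}A&B\\ C&D\end{pmatrix}$ with entries $A_{ij}=\varphi_t(x'_j-x_i)$ $(1\le i,j\le n+1)$, $B_{ij}=\Phi_t(y'_j-x_i)-\mathbf 1\{j\ge i\}$ $(1\le i\le n+1,\ 1\le j\le n)$, $C_{ij}=\varphi'_t(x'_j-y_i)$ $(1\le i\le n,\ 1\le j\le n+1)$, $D_{ij}=\varphi_t(y'_j-y_i)$ $(1\le i,j\le n)$. Let $f:W\to\mathbb R$ be bounded and continuous, and zero on a neighbourhood of the boundary of $W$. Then for all $t>0$ and $w\in W$ the integral $\int_W q^n_t(w,w')f(w')\,dw'$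 converges absolutely, and as $t\downarrow 0$ it converges to $f(w)$, uniformly over $w$ in each compact subset of $W$. If, moreover, $f$ is uniformly continuous, then the convergence is uniform over all of $W$, that is, $$\sup_{w\in W}\Bigl|\int_W q^n_t(w,w')f(w')\,dw'-f(w)\Bigr|\to 0\qquad\text{as } t\downarrow 0 .$$ -/

import Mathlib

/-- The centered Gaussian density `φ_t` with variance `t`. -/
noncomputable def gauss (t y : ℝ) : ℝ :=
  (Real.sqrt (2 * Real.pi * t))⁻¹ * Real.exp (-y ^ 2 / (2 * t))

/-- The Gaussian cumulative distribution function `Φ_t`. -/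
noncomputable def gaussCDF (t y : ℝ) : ℝ := ∫ z in Set.Iic y, gauss t z

/-- The derivative `φ'_t` of the Gaussian density. -/
noncomputable def gaussDeriv (t y : ℝ) : ℝ :=
  -y / Real.sqrt (2 * Real.pi * t ^ 3) * Real.exp (-y ^ 2 / (2 * t))

/-- The kernel `q^n_t(w, w')` with `w = (x, y)` and `w' = (x', y')`, a `(2n+1)×(2n+1)` block
determinant. -/
noncomputable def qKer (n : ℕ) (t : ℝ) (w w' : (Fin (n + 1) → ℝ) × (Fin n → ℝ)) : ℝ :=
  Matrix.det (Matrix.fromBlocks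
    (Matrix.of fun i j : Fin (n + 1) => gauss t (w'.1 j - w.1 i))
    (Matrix.of fun (i : Fin (n + 1)) (j : Fin n) =>
      gaussCDF t (w'.2 j - w.1 i) - (if (i : ℕ) ≤ (j : ℕ) then (1 : ℝ) else 0))
    (Matrix.of fun (i : Fin n) (j : Fin (n + 1)) => gaussDeriv t (w'.1 j - w.2 i))
    (Matrix.of fun i j : Fin n => gauss t (w'.2 j - w.2 i)))

/-- The interlacing region `W^{n+1,n}`. -/
def Wint (n : ℕ) : Set ((Fin (n + 1) → ℝ) × (Fin n → ℝ)) :=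
  {w | ∀ i : Fin n, w.1 i.castSucc ≤ w.2 i ∧ w.2 i ≤ w.1 i.succ}

/-!
Extend `f` by zero to a continuous function `g` and expand the determinant `q_t(w, w')` by the
Leibniz formula. A matrix entry has a Gaussian tail in the difference of its two coordinates as long
as these lie in the order of their positions in the interlacing pattern; otherwise it may be large.
For `w, w' ∈ W`, however, a counting argument finds in the term of each permutation `σ` an entry
with a Gaussian tail whose difference is the largest of the term. So this term is dominated by a
Gaussian envelope of width `√t` centred at the point `w ∘ σ`.

For `σ ≠ 1` the point `w ∘ σ` lies outside the interior of `W`, where `g` vanishes, so the term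
integrates against `g` to something small. The term of `σ = 1` is a product of Gaussian densities
centred at `w`, an approximate identity. The convergence is as uniform as the continuity of `g` at
the points `w ∘ σ`.
-/

open Filter MeasureTheory Module ProbabilityTheory Real Set
open scoped NNReal Topology Uniformity

section Frontier

theorem exists_mem_frontier_of_isPreconnected {X : Type*} [TopologicalSpace X] {s t : Set X}
    (ht : IsPreconnected t) {x y : X} (hx : x ∈ t) (hxs : x ∈ s) (hy : y ∈ t) (hys : y ∉ s) :
    ∃ z ∈ t, z ∈ frontier s := by
  by_contra! h
  have hcover : t ⊆ interior s ∪ interior sᶜ := fun z hz => by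
    by_contra hzs
    rw [mem_union, not_or, interior_compl, notMem_compl_iff] at hzs
    exact h z hz ⟨hzs.2, hzs.1⟩
  have hxi : x ∈ interior s :=
    (hcover hx).resolve_right fun hxc => interior_subset hxc hxs
  have hyi : y ∈ interior sᶜ := (hcover hy).resolve_left fun hyi => hys (interior_subset hyi)
  obtain ⟨z, -, hz, hzc⟩ :=
    ht _ _ isOpen_interior isOpen_interior hcover ⟨x, hx, hxi⟩ ⟨y, hy, hyi⟩
  exact interior_subset hzc (interior_subset hz)

theorem indicator_eq_zero_of_notMem_interior {X M : Type*} [TopologicalSpace X] [Zero M] {s : Set X}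
    {f : X → M} (hs : IsClosed s) (hf : ∀ x ∈ frontier s, f x = 0) {x : X} (hx : x ∉ interior s) :
    s.indicator f x = 0 :=
  indicator_apply_eq_zero.2 fun hxs => hf x (hs.frontier_eq ▸ ⟨hxs, hx⟩)

variable {E F : Type*} [SeminormedAddCommGroup E] [NormedSpace ℝ E]
  [SeminormedAddCommGroup F]

theorem uniformContinuous_indicator {s : Set E} {f : E → F} (hs : IsClosed s)
    (hf : UniformContinuousOn f s) (hf₀ : ∀ x ∈ frontier s, f x = 0) :
    UniformContinuous (s.indicator f) := by
  rw [Metric.uniformContinuous_iff]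
  intro ε hε
  obtain ⟨δ, hδ, h⟩ := Metric.uniformContinuousOn_iff.1 hf ε hε
  -- The segment from a point of `s` to a point outside `s` crosses the frontier, where `f = 0`.
  have hcross : ∀ x ∈ s, ∀ y ∉ s, dist x y < δ → dist (f x) 0 < ε := fun x hx y hy hxy => by
    obtain ⟨z, hz, hzs⟩ := exists_mem_frontier_of_isPreconnected
      (convex_segment x y).isPreconnected (left_mem_segment ℝ x y) hx
      (right_mem_segment ℝ x y) hy
    have hzx : dist x z ≤ dist x y := by
      rw [← dist_add_dist_of_mem_segment hz]; exact le_add_of_nonneg_right dist_nonneg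
    simpa only [hf₀ z hzs] using h x hx z (hs.frontier_subset hzs) (hzx.trans_lt hxy)
  refine ⟨δ, hδ, fun {x y} hxy => ?_⟩
  by_cases hx : x ∈ s <;> by_cases hy : y ∈ s
  · simpa only [indicator_of_mem, hx, hy] using h x hx y hy hxy
  · simpa only [indicator_of_mem hx, indicator_of_notMem hy] using hcross x hx y hy hxy
  · rw [dist_comm] at hxy ⊢
    simpa only [indicator_of_notMem hx, indicator_of_mem hy] using hcross y hy x hx hxy
  · simpa only [indicator_of_notMem hx, indicator_of_notMem hy, dist_self] using hε

end Frontier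

section Translates

variable {G H : Type*} [AddCommGroup G] [UniformSpace G] [IsUniformAddGroup G] [UniformSpace H]
  {g : G → H} {T : Set G}

theorem tendstoUniformlyOn_comp_add
    (h : ∀ r ∈ 𝓤 H, {p : G × G | p.1 ∈ T → (g p.1, g p.2) ∈ r} ∈ 𝓤 G) :
    TendstoUniformlyOn (fun u x => g (x + u)) g (𝓝 0) T := by
  intro r hr
  obtain ⟨V, hV, hVr⟩ := mem_comap.1 (uniformity_eq_comap_nhds_zero G ▸ h r hr)
  filter_upwards [hV] with u hu x hx
  exact hVr (a := (x, x + u)) (by simpa using hu) hx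

theorem tendstoUniformlyOn_comp_add_of_uniformContinuous (hg : UniformContinuous g) :
    TendstoUniformlyOn (fun u x => g (x + u)) g (𝓝 0) T :=
  tendstoUniformlyOn_comp_add fun _ hr => mem_of_superset (hg hr) fun _ hp _ => hp

theorem tendstoUniformlyOn_comp_add_of_isCompact (hg : Continuous g) (hT : IsCompact T) :
    TendstoUniformlyOn (fun u x => g (x + u)) g (𝓝 0) T :=
  tendstoUniformlyOn_comp_add fun _ hr =>
    hT.uniformContinuousAt_of_continuousAt g (fun _ _ => hg.continuousAt) hr

end Translates

section Envelope

variable {E : Type*} [NormedAddCommGroup E] [NormedSpace ℝ E]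

/-- The Gaussian function that dominates the terms of the Leibniz expansion of `qKer`. It scales
like a heat kernel but is not normalised; its exponent has `4 * t` where the kernel has `2 * t`,
which leaves room to absorb the polynomial factor in `gaussDeriv`. -/
noncomputable def gaussEnvelope (t : ℝ) (u : E) : ℝ :=
  (√t)⁻¹ ^ finrank ℝ E * exp (-‖u‖ ^ 2 / (4 * t))

theorem gaussEnvelope_nonneg (t : ℝ) (u : E) : 0 ≤ gaussEnvelope t u := by
  unfold gaussEnvelope; positivity

theorem gaussEnvelope_le_of_le_norm {t δ : ℝ} (ht : 0 < t) (hδ : 0 ≤ δ) {u : E} (hu : δ ≤ ‖u‖) :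
    gaussEnvelope t u ≤
      √2 ^ finrank ℝ E * exp (-δ ^ 2 / (8 * t)) * gaussEnvelope (2 * t) u := by
  have hexp : exp (-‖u‖ ^ 2 / (4 * t)) ≤
      exp (-δ ^ 2 / (8 * t)) * exp (-‖u‖ ^ 2 / (4 * (2 * t))) := by
    rw [← exp_add, exp_le_exp]
    calc -‖u‖ ^ 2 / (4 * t) = -‖u‖ ^ 2 / (8 * t) + -‖u‖ ^ 2 / (4 * (2 * t)) := by field_simp; ring
      _ ≤ _ := by gcongr
  have hscale : √2 ^ finrank ℝ E * (√(2 * t))⁻¹ ^ finrank ℝ E = (√t)⁻¹ ^ finrank ℝ E := by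
    rw [← mul_pow, sqrt_mul zero_le_two, mul_inv, mul_inv_cancel_left₀ (by positivity)]
  calc gaussEnvelope t u ≤ (√t)⁻¹ ^ finrank ℝ E *
        (exp (-δ ^ 2 / (8 * t)) * exp (-‖u‖ ^ 2 / (4 * (2 * t)))) := by
        unfold gaussEnvelope; gcongr
    _ = _ := by rw [gaussEnvelope, ← hscale]; ring

variable [FiniteDimensional ℝ E] [MeasurableSpace E] [BorelSpace E] (μ : Measure E)
  [μ.IsAddHaarMeasure]

theorem integrable_exp_neg_mul_sq_norm {b : ℝ} (hb : 0 < b) :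
    Integrable (fun x : E => exp (-b * ‖x‖ ^ 2)) μ := by
  cases subsingleton_or_nontrivial E with
  | inl _ => exact .of_finite
  | inr _ =>
    refine (integrable_fun_norm_addHaar μ (f := fun r => exp (-b * r ^ 2))).2 ?_
    simpa only [smul_eq_mul, Real.rpow_natCast] using
      integrableOn_rpow_mul_exp_neg_mul_sq hb
        (neg_one_lt_zero.trans_le (finrank ℝ E - 1).cast_nonneg)

theorem integrable_gaussEnvelope {t : ℝ} (ht : 0 < t) :
    Integrable (gaussEnvelope t : E → ℝ) μ := by
  refine ((integrable_exp_neg_mul_sq_norm μ (b := (4 * t)⁻¹) (by positivity)).const_mul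
    ((√t)⁻¹ ^ finrank ℝ E)).congr (.of_forall fun u => ?_)
  simp only [gaussEnvelope]
  ring_nf

theorem integral_gaussEnvelope {t : ℝ} (ht : 0 < t) :
    ∫ u, gaussEnvelope t u ∂μ = ∫ u : E, gaussEnvelope 1 u ∂μ := by
  have hst : 0 < √t := sqrt_pos.2 ht
  have hscale : ∀ u : E, gaussEnvelope t u =
      (√t)⁻¹ ^ finrank ℝ E * gaussEnvelope 1 ((√t)⁻¹ • u) := fun u => by
    simp only [gaussEnvelope, norm_smul, norm_inv, Real.norm_eq_abs, abs_of_pos hst, mul_pow,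
      inv_pow, sq_sqrt ht.le, sqrt_one, one_pow, inv_one, one_mul]
    congr 2
    field_simp
  simp only [hscale, integral_const_mul, μ.integral_comp_inv_smul_of_nonneg _ hst.le, smul_eq_mul]
  rw [← mul_assoc, ← mul_pow, inv_mul_cancel₀ hst.ne', one_pow, one_mul]

theorem tendsto_exp_neg_div_nhdsGT_zero {c : ℝ} (hc : 0 < c) :
    Tendsto (fun t : ℝ => exp (-c / t)) (𝓝[>] 0) (𝓝 0) := by
  simp only [div_eq_mul_inv]
  exact tendsto_exp_atBot.comp
    (tendsto_inv_nhdsGT_zero.const_mul_atTop_of_neg (neg_lt_zero.2 hc))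

theorem tendsto_setIntegral_gaussEnvelope {δ : ℝ} (hδ : 0 < δ) :
    Tendsto (fun t => ∫ u in {u : E | δ ≤ ‖u‖}, gaussEnvelope t u ∂μ) (𝓝[>] 0) (𝓝 0) := by
  have hδE : MeasurableSet {u : E | δ ≤ ‖u‖} := measurableSet_le measurable_const measurable_norm
  have hlim : Tendsto (fun t => √2 ^ finrank ℝ E * exp (-(δ ^ 2 / 8) / t) *
      ∫ u : E, gaussEnvelope 1 u ∂μ) (𝓝[>] 0) (𝓝 0) := by
    simpa using ((tendsto_exp_neg_div_nhdsGT_zero (by positivity : 0 < δ ^ 2 / 8)).const_mul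
      (√2 ^ finrank ℝ E)).mul_const (∫ u : E, gaussEnvelope 1 u ∂μ)
  refine squeeze_zero' (.of_forall fun t => integral_nonneg (gaussEnvelope_nonneg t)) ?_ hlim
  filter_upwards [self_mem_nhdsWithin] with t (ht : 0 < t)
  have hint := (integrable_gaussEnvelope μ (by positivity : 0 < 2 * t)).const_mul
    (√2 ^ finrank ℝ E * exp (-δ ^ 2 / (8 * t)))
  calc ∫ u in {u : E | δ ≤ ‖u‖}, gaussEnvelope t u ∂μ
      ≤ ∫ u in {u : E | δ ≤ ‖u‖},
          √2 ^ finrank ℝ E * exp (-δ ^ 2 / (8 * t)) * gaussEnvelope (2 * t) u ∂μ :=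
        setIntegral_mono_on (integrable_gaussEnvelope μ ht).integrableOn hint.integrableOn hδE
          fun u hu => gaussEnvelope_le_of_le_norm ht hδ.le hu
    _ ≤ ∫ u, √2 ^ finrank ℝ E * exp (-δ ^ 2 / (8 * t)) * gaussEnvelope (2 * t) u ∂μ :=
        setIntegral_le_integral hint (.of_forall fun u =>
          mul_nonneg (by positivity) (gaussEnvelope_nonneg _ u))
    _ = _ := by
        rw [integral_const_mul, integral_gaussEnvelope μ (by positivity), ← neg_div, div_div]

end Envelope

section Oscillation

variable {E F ι : Type*} [NormedAddCommGroup E] [NormedSpace ℝ E]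
  [MeasurableSpace E] (μ : Measure E) [NormedAddCommGroup F] {g : E → F} {B : ℝ}

/-- The mean oscillation of `g` around `z`, weighted by `gaussEnvelope t (· - z)`. All error terms
are measured by it. -/
noncomputable def gaussOsc (g : E → F) (t : ℝ) (z : E) : ℝ :=
  ∫ y, gaussEnvelope t (y - z) * ‖g y - g z‖ ∂μ

theorem gaussOsc_nonneg (t : ℝ) (z : E) : 0 ≤ gaussOsc μ g t z :=
  integral_nonneg fun _ => mul_nonneg (gaussEnvelope_nonneg _ _) (norm_nonneg _)

variable [FiniteDimensional ℝ E] [BorelSpace E] [μ.IsAddHaarMeasure]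

theorem integrable_gaussEnvelope_mul_norm_sub (hg : Continuous g) (hB : ∀ x, ‖g x‖ ≤ B) {t : ℝ}
    (ht : 0 < t) (z : E) : Integrable (fun y => gaussEnvelope t (y - z) * ‖g y - g z‖) μ := by
  refine ((integrable_gaussEnvelope μ ht).comp_sub_right z).mul_bdd (c := B + B)
    (by fun_prop) (.of_forall fun y => ?_)
  rw [norm_norm]
  exact norm_sub_le_of_le (hB y) (hB z)

theorem gaussOsc_le (hg : Continuous g) (hB : ∀ x, ‖g x‖ ≤ B) {t δ η : ℝ} (ht : 0 < t) {z : E}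
    (hη₀ : 0 ≤ η) (hη : ∀ u, ‖u‖ < δ → ‖g (z + u) - g z‖ ≤ η) :
    gaussOsc μ g t z ≤ η * ∫ u : E, gaussEnvelope 1 u ∂μ +
      (B + B) * ∫ u in {u : E | δ ≤ ‖u‖}, gaussEnvelope t u ∂μ := by
  have hδ : MeasurableSet {u : E | δ ≤ ‖u‖} := measurableSet_le measurable_const measurable_norm
  have henv := integrable_gaussEnvelope μ (E := E) ht
  have hpt : ∀ u, gaussEnvelope t u * ‖g (z + u) - g z‖ ≤ η * gaussEnvelope t u +
      (B + B) * {u : E | δ ≤ ‖u‖}.indicator (gaussEnvelope t) u := fun u => by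
    have henv₀ := gaussEnvelope_nonneg t u
    rcases lt_or_ge ‖u‖ δ with hu | hu
    · rw [indicator_of_notMem (by simpa using hu), mul_zero, add_zero, mul_comm]
      exact mul_le_mul_of_nonneg_right (hη u hu) henv₀
    · rw [indicator_of_mem (by exact hu), mul_comm]
      exact (mul_le_mul_of_nonneg_right (norm_sub_le_of_le (hB _) (hB _)) henv₀).trans
        (le_add_of_nonneg_left (mul_nonneg hη₀ henv₀))
  calc gaussOsc μ g t z = ∫ u, gaussEnvelope t u * ‖g (z + u) - g z‖ ∂μ := by
        rw [← integral_sub_right_eq_self _ z]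
        simp only [add_sub_cancel, gaussOsc]
    _ ≤ ∫ u, (η * gaussEnvelope t u +
          (B + B) * {u : E | δ ≤ ‖u‖}.indicator (gaussEnvelope t) u) ∂μ :=
        integral_mono
          (by simpa only [add_sub_cancel_left] using
            (integrable_gaussEnvelope_mul_norm_sub μ hg hB ht z).comp_add_left z)
          ((henv.const_mul η).add ((henv.indicator hδ).const_mul _)) hpt
    _ = _ := by
        rw [integral_add (henv.const_mul η) ((henv.indicator hδ).const_mul _), integral_const_mul,
          integral_const_mul, integral_indicator hδ, integral_gaussEnvelope μ ht]

theorem tendstoUniformlyOn_gaussOsc (hg : Continuous g) (hB : ∀ x, ‖g x‖ ≤ B) {T : Set E}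
    (hT : TendstoUniformlyOn (fun u x => g (x + u)) g (𝓝 0) T) :
    TendstoUniformlyOn (gaussOsc μ g) (fun _ => 0) (𝓝[>] 0) T := by
  rw [Metric.tendstoUniformlyOn_iff]
  intro ε hε
  set M := ∫ u : E, gaussEnvelope 1 u ∂μ
  have hM₀ : 0 ≤ M := integral_nonneg (gaussEnvelope_nonneg 1)
  obtain ⟨δ, hδ, hη⟩ := Metric.eventually_nhds_iff.1
    (Metric.tendstoUniformlyOn_iff.1 hT (ε / (M + 1)) (by positivity))
  have hlim : Tendsto (fun t => ε / (M + 1) * M +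
      (B + B) * ∫ u in {u : E | δ ≤ ‖u‖}, gaussEnvelope t u ∂μ) (𝓝[>] 0)
      (𝓝 (ε / (M + 1) * M + (B + B) * 0)) :=
    tendsto_const_nhds.add ((tendsto_setIntegral_gaussEnvelope μ hδ).const_mul _)
  have hlt : ε / (M + 1) * M + (B + B) * 0 < ε := by
    rw [mul_zero, add_zero, div_mul_eq_mul_div, div_lt_iff₀ (by positivity)]; linarith
  filter_upwards [hlim.eventually_lt_const hlt, self_mem_nhdsWithin] with t htε (ht : 0 < t) z hz
  rw [dist_zero_left, Real.norm_of_nonneg (gaussOsc_nonneg μ t z)]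
  refine (gaussOsc_le μ hg hB ht (by positivity) fun u hu => ?_).trans_lt htε
  rw [← dist_eq_norm']
  exact (hη (by rwa [dist_zero_right]) z hz).le

theorem tendstoUniformlyOn_of_norm_sub_le_sum_gaussOsc (hg : Continuous g) (hB : ∀ x, ‖g x‖ ≤ B)
    {S T : Set E} (hT : TendstoUniformlyOn (fun u x => g (x + u)) g (𝓝 0) T) {Q : ℝ → E → F}
    {s : Finset ι} {c : ι → E → E} (hc : ∀ i ∈ s, MapsTo (c i) S T)
    (hQ : ∀ t > 0, ∀ x ∈ S, ‖Q t x - g x‖ ≤ ∑ i ∈ s, gaussOsc μ g t (c i x)) :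
    TendstoUniformlyOn Q g (𝓝[>] 0) S := by
  rw [Metric.tendstoUniformlyOn_iff]
  intro ε hε
  filter_upwards [Metric.tendstoUniformlyOn_iff.1 (tendstoUniformlyOn_gaussOsc μ hg hB hT)
    (ε / (s.card + 1)) (by positivity), self_mem_nhdsWithin] with t hosc (ht : 0 < t) x hx
  calc dist (g x) (Q t x) = ‖Q t x - g x‖ := dist_eq_norm' _ _
    _ ≤ ∑ i ∈ s, gaussOsc μ g t (c i x) := hQ t ht x hx
    _ ≤ s.card • (ε / (s.card + 1)) := Finset.sum_le_card_nsmul _ _ _ fun i hi => by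
        simpa only [dist_zero_left, Real.norm_of_nonneg (gaussOsc_nonneg μ t _)] using
          (hosc _ (hc i hi hx)).le
    _ < ε := by
        rw [nsmul_eq_mul, mul_div_left_comm, ← mul_div_assoc, div_lt_iff₀ (by positivity)]
        linarith

variable [NormedSpace ℝ F] [CompleteSpace F] {W : Set E}

theorem norm_setIntegral_smul_sub_le (hW : MeasurableSet W) (hg : Continuous g)
    (hB : ∀ x, ‖g x‖ ≤ B) (hg₀ : ∀ x ∉ W, g x = 0) {t : ℝ} (ht : 0 < t) {x : E} {q k : E → ℝ}
    (hq : IntegrableOn q W μ) (hk : ∫ y, k y ∂μ = 1)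
    (hkle : ∀ y, |k y| ≤ gaussEnvelope t (y - x)) {s : Finset ι} {c : ι → E}
    (hqk : ∀ y ∈ W, |q y - k y| ≤ ∑ i ∈ s, gaussEnvelope t (y - c i))
    (hc : ∀ i ∈ s, g (c i) = 0) :
    ‖(∫ y in W, q y • g y ∂μ) - g x‖ ≤ gaussOsc μ g t x + ∑ i ∈ s, gaussOsc μ g t (c i) := by
  have hkint : Integrable k μ := .of_integral_ne_zero (hk ▸ one_ne_zero)
  have hosc := integrable_gaussEnvelope_mul_norm_sub μ hg hB ht
  have hsmul : ∀ {p : E → ℝ} {ν : Measure E}, Integrable p ν → Integrable (fun y => p y • g y) ν :=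
    fun hp => hp.smul_bdd B hg.aestronglyMeasurable (.of_forall hB)
  have hsplit : (∫ y in W, q y • g y ∂μ) - g x =
      (∫ y, k y • (g y - g x) ∂μ) + ∫ y in W, (q y - k y) • g y ∂μ := by
    simp only [smul_sub, sub_smul]
    rw [integral_sub (hsmul hkint) (hkint.smul_const _), integral_smul_const, hk, one_smul,
      integral_sub (hsmul hq) (hsmul hkint.integrableOn),
      setIntegral_eq_integral_of_forall_compl_eq_zero (f := fun y => k y • g y)
        fun y hy => by rw [hg₀ y hy, smul_zero]]
    abel
  have hk_le : ‖∫ y, k y • (g y - g x) ∂μ‖ ≤ gaussOsc μ g t x :=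
    norm_integral_le_of_norm_le (hosc x) (.of_forall fun y => by
      rw [norm_smul]; gcongr; exact hkle y)
  have hqk_le : ‖∫ y in W, (q y - k y) • g y ∂μ‖ ≤ ∑ i ∈ s, gaussOsc μ g t (c i) := by
    have hsum := integrable_finsetSum s fun i _ => hosc (c i)
    calc ‖∫ y in W, (q y - k y) • g y ∂μ‖
        ≤ ∫ y in W, ∑ i ∈ s, gaussEnvelope t (y - c i) * ‖g y - g (c i)‖ ∂μ := by
          refine norm_integral_le_of_norm_le hsum.integrableOn
            ((ae_restrict_iff' hW).2 (.of_forall fun y hy => ?_))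
          rw [norm_smul, Finset.sum_congr rfl fun i hi => by rw [hc i hi, sub_zero],
            ← Finset.sum_mul]
          exact mul_le_mul_of_nonneg_right (hqk y hy) (norm_nonneg _)
      _ ≤ ∫ y, ∑ i ∈ s, gaussEnvelope t (y - c i) * ‖g y - g (c i)‖ ∂μ :=
          setIntegral_le_integral hsum (.of_forall fun y => Finset.sum_nonneg fun i _ =>
            mul_nonneg (gaussEnvelope_nonneg _ _) (norm_nonneg _))
      _ = ∑ i ∈ s, gaussOsc μ g t (c i) := integral_finsetSum s fun i _ => hosc (c i)
  rw [hsplit]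
  exact norm_add_le_of_le hk_le hqk_le

end Oscillation

section Chamber

section Preorder

variable {ι α : Type*} [Preorder α] {p : ι → α} {v : ι → ℝ}

/-- The chamber of the order given by the positions `p`: the vectors that are monotone in them. -/
def chamber (p : ι → α) : Set (ι → ℝ) := {v | ∀ a b, p a ≤ p b → v a ≤ v b}

theorem isClosed_chamber (p : ι → α) : IsClosed (chamber p) := by
  simp only [chamber, ofPred_forall]
  exact isClosed_iInter fun a => isClosed_iInter fun b => isClosed_iInter fun _ =>
    isClosed_le (continuous_apply a) (continuous_apply b)

theorem lt_of_mem_interior_chamber (hv : v ∈ interior (chamber p)) {a b : ι} (hab : p a < p b) :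
    v a < v b := by
  classical
  have hlim : Tendsto (fun ε => Function.update v b (v b - ε)) (𝓝[>] (0 : ℝ)) (𝓝 v) := by
    have hcont : Continuous fun ε : ℝ => Function.update v b (v b - ε) := by fun_prop
    simpa using (hcont.tendsto 0).mono_left nhdsWithin_le_nhds
  obtain ⟨ε, hε, hε₀⟩ :=
    ((hlim.eventually (mem_interior_iff_mem_nhds.1 hv)).and self_mem_nhdsWithin).exists
  have hle := hε a b hab.le
  rw [Function.update_self, Function.update_of_ne (ne_of_apply_ne p hab.ne)] at hle
  exact hle.trans_lt (sub_lt_self _ hε₀)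

/-- `v r` and `v' c` lie weakly in the order of the positions `p r` and `p c`, without condition
when the positions agree. In this case the `(r, c)` entry of `qMatrix` is bounded by a Gaussian. -/
def OrderCompatible (p : ι → α) (v v' : ι → ℝ) (r c : ι) : Prop :=
  (p r < p c → v r ≤ v' c) ∧ (p c < p r → v' c ≤ v r)

end Preorder

variable {ι α : Type*} [LinearOrder α] {p : ι → α} {v v' : ι → ℝ}

section Finite

variable [Finite ι]

theorem exists_le_and_le_perm (p : ι → α) (σ : Equiv.Perm ι) (r : ι) :
    ∃ b, p b ≤ p r ∧ p r ≤ p (σ b) := by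
  by_contra! h
  have hmaps : MapsTo σ {b | p b ≤ p r} {b | p b ≤ p r} := fun b hb => (h b hb).le
  obtain ⟨b, hb, hbr⟩ : r ∈ σ '' {b | p b ≤ p r} :=
    (((toFinite _).injOn_iff_bijOn_of_mapsTo hmaps).1 σ.injective.injOn).surjOn le_rfl
  exact (h b hb).ne (congrArg p hbr)

theorem perm_eq_one_of_forall_lt (hp : Function.Injective p) {σ : Equiv.Perm ι}
    (hσ : ∀ a b, p a < p b → p (σ a) < p (σ b)) : σ = 1 := by
  have hle : ∀ a b, p (σ a) ≤ p (σ b) ↔ p a ≤ p b := fun a b =>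
    ⟨fun h => not_lt.1 fun hba => h.not_gt (hσ b a hba), fun h => h.eq_or_lt.elim
      (fun hab => (congrArg (p ∘ σ) (hp hab)).le) fun hab => (hσ a b hab).le⟩
  refine Equiv.ext fun r => hp (le_antisymm ?_ ?_)
  · obtain ⟨b, hb, hrb⟩ := exists_le_and_le_perm p σ.symm (σ r)
    rw [← σ.apply_symm_apply b, hle] at hb
    exact hrb.trans hb
  · obtain ⟨b, hb, hrb⟩ := exists_le_and_le_perm p σ r
    exact hrb.trans ((hle b r).2 hb)

theorem comp_perm_notMem_interior_chamber (hp : Function.Injective p) (hv : v ∈ chamber p)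
    {σ : Equiv.Perm ι} (hσ : σ ≠ 1) : v ∘ σ ∉ interior (chamber p) := fun hvσ =>
  hσ <| perm_eq_one_of_forall_lt hp fun _ _ hab =>
    lt_of_not_ge fun hba => (lt_of_mem_interior_chamber hvσ hab).not_ge (hv _ _ hba)

theorem exists_orderCompatible_perm (hv : v ∈ chamber p) (hv' : v' ∈ chamber p)
    (σ : Equiv.Perm ι) (a : ι) :
    ∃ b, OrderCompatible p v v' (σ b) b ∧ |v' a - v (σ a)| ≤ |v' b - v (σ b)| := by
  by_cases ha : OrderCompatible p v v' (σ a) a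
  · exact ⟨a, ha, le_rfl⟩
  rw [OrderCompatible, not_and_or, Classical.not_imp, Classical.not_imp, not_le, not_le] at ha
  rcases ha with ⟨hpos, hval⟩ | ⟨hpos, hval⟩
  · obtain ⟨b, hb, hσb⟩ := exists_le_and_le_perm p σ (σ a)
    have hba : v' b ≤ v' a := hv' _ _ (hb.trans hpos.le)
    have hab : v (σ a) ≤ v (σ b) := hv _ _ hσb
    refine ⟨b, ⟨fun h => absurd (hb.trans hσb) h.not_ge, fun _ => by linarith⟩, ?_⟩
    rw [abs_of_neg (by linarith), abs_of_neg (by linarith)]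
    linarith
  · obtain ⟨c, hc, hσc⟩ := exists_le_and_le_perm p σ.symm (σ a)
    have hab : v' a ≤ v' (σ.symm c) := hv' _ _ (hpos.le.trans hσc)
    have hba : v (σ (σ.symm c)) ≤ v (σ a) := by
      rw [σ.apply_symm_apply]
      exact hv _ _ hc
    refine ⟨σ.symm c, ⟨fun _ => by linarith, fun h => ?_⟩, ?_⟩
    · rw [σ.apply_symm_apply] at h
      exact absurd (hc.trans hσc) h.not_ge
    · rw [abs_of_pos (by linarith), abs_of_pos (by linarith)]
      linarith

end Finite

theorem exists_orderCompatible_norm_le [Fintype ι] [Nonempty ι] (hv : v ∈ chamber p)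
    (hv' : v' ∈ chamber p) (σ : Equiv.Perm ι) :
    ∃ b, OrderCompatible p v v' (σ b) b ∧ ‖v' - v ∘ σ‖ ≤ |v' b - v (σ b)| := by
  obtain ⟨a, ha⟩ := Finite.exists_max fun a => |v' a - v (σ a)|
  obtain ⟨b, hb, hab⟩ := exists_orderCompatible_perm hv hv' σ a
  exact ⟨b, hb, (pi_norm_le_iff_of_nonempty _).2 fun i => (ha i).trans hab⟩

end Chamber

section Gaussian

theorem hasSubgaussianMGF_id_gaussianReal (v : ℝ≥0) :
    HasSubgaussianMGF id v (gaussianReal 0 v) where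
  integrable_exp_mul := integrable_exp_mul_gaussianReal
  mgf_le r := by simp [mgf_id_gaussianReal]

theorem cdf_gaussianReal_le {v : ℝ≥0} {y : ℝ} (hy : y ≤ 0) :
    cdf (gaussianReal 0 v) y ≤ exp (-y ^ 2 / (2 * v)) := by
  simpa [cdf_eq_real, Iic_def] using
    (hasSubgaussianMGF_id_gaussianReal v).neg.measure_ge_le (neg_nonneg.2 hy)

theorem one_sub_cdf_gaussianReal_le {v : ℝ≥0} {y : ℝ} (hy : 0 ≤ y) :
    1 - cdf (gaussianReal 0 v) y ≤ exp (-y ^ 2 / (2 * v)) := by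
  rw [cdf_eq_real, ← probReal_compl_eq_one_sub measurableSet_Iic, compl_Iic]
  exact (measureReal_mono Ioi_subset_Ici_self).trans
    ((hasSubgaussianMGF_id_gaussianReal v).measure_ge_le hy)

variable {t : ℝ}

theorem gauss_nonneg (t y : ℝ) : 0 ≤ gauss t y := by
  unfold gauss
  positivity

theorem gauss_eq_gaussianPDFReal (ht : 0 < t) : gauss t = gaussianPDFReal 0 t.toNNReal := by
  ext z
  simp only [gauss, gaussianPDFReal, sub_zero, Real.coe_toNNReal t ht.le]

theorem gaussCDF_eq_cdf (ht : 0 < t) : gaussCDF t = cdf (gaussianReal 0 t.toNNReal) := by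
  have ht' : t.toNNReal ≠ 0 := (Real.toNNReal_pos.2 ht).ne'
  ext z
  rw [cdf_eq_real, measureReal_def, gaussianReal_apply_eq_integral _ ht',
    ENNReal.toReal_ofReal (integral_nonneg fun _ => gaussianPDFReal_nonneg _ _ _), gaussCDF,
    gauss_eq_gaussianPDFReal ht]

theorem abs_gaussCDF_sub_ite_le_one (ht : 0 < t) (y : ℝ) (P : Prop) [Decidable P] :
    |gaussCDF t y - if P then 1 else 0| ≤ 1 := by
  have h₀ := cdf_nonneg (gaussianReal 0 t.toNNReal) y
  have h₁ := cdf_le_one (gaussianReal 0 t.toNNReal) y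
  rw [gaussCDF_eq_cdf ht, abs_le]
  split_ifs <;> constructor <;> linarith

theorem abs_gaussCDF_sub_ite_le (ht : 0 < t) {y : ℝ} {P : Prop} [Decidable P]
    (hP : P → 0 ≤ y) (hP' : ¬ P → y ≤ 0) :
    |gaussCDF t y - if P then 1 else 0| ≤ exp (-y ^ 2 / (2 * t)) := by
  rw [gaussCDF_eq_cdf ht]
  nth_rw 2 [← Real.coe_toNNReal t ht.le]
  split_ifs with h
  · rw [abs_sub_comm, abs_of_nonneg (sub_nonneg.2 (cdf_le_one _ _))]
    exact one_sub_cdf_gaussianReal_le (hP h)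
  · rw [sub_zero, abs_of_nonneg (cdf_nonneg _ _)]
    exact cdf_gaussianReal_le (hP' h)

theorem abs_mul_exp_neg_sq_le (ht : 0 < t) (y : ℝ) : |y| * exp (-y ^ 2 / (4 * t)) ≤ √t := by
  have hst : 0 < √t := sqrt_pos.2 ht
  have hexp : |y| / √t ≤ exp (y ^ 2 / (4 * t)) :=
    calc |y| / √t ≤ (|y| / √t) ^ 2 / 4 + 1 := by linarith [sq_nonneg (|y| / √t / 2 - 1)]
      _ ≤ exp ((|y| / √t) ^ 2 / 4) := add_one_le_exp _
      _ = exp (y ^ 2 / (4 * t)) := by rw [div_pow, sq_abs, sq_sqrt ht.le, div_div, mul_comm t]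
  rwa [neg_div, exp_neg, ← div_eq_mul_inv, div_le_iff₀ (exp_pos _), ← div_le_iff₀' hst]

theorem gauss_le_exp (ht : 0 < t) (y : ℝ) : gauss t y ≤ (√t)⁻¹ * exp (-y ^ 2 / (2 * t)) := by
  unfold gauss
  gcongr
  exact le_mul_of_one_le_left ht.le (by linarith [pi_gt_three])

theorem exp_neg_sq_div_two_mul_le (ht : 0 < t) (y : ℝ) :
    exp (-y ^ 2 / (2 * t)) ≤ exp (-y ^ 2 / (4 * t)) := by
  rw [exp_le_exp, neg_div, neg_div, neg_le_neg_iff]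
  gcongr
  norm_num

theorem abs_gauss_le (ht : 0 < t) (y : ℝ) : |gauss t y| ≤ (√t)⁻¹ * exp (-y ^ 2 / (4 * t)) := by
  rw [abs_of_nonneg (gauss_nonneg t y)]
  exact (gauss_le_exp ht y).trans
    (mul_le_mul_of_nonneg_left (exp_neg_sq_div_two_mul_le ht y) (by positivity))

theorem gaussDeriv_eq (ht : 0 < t) (y : ℝ) : gaussDeriv t y = -(y / t * gauss t y) := by
  rw [gaussDeriv, gauss, show 2 * π * t ^ 3 = t ^ 2 * (2 * π * t) by ring,
    sqrt_mul (sq_nonneg t), sqrt_sq ht.le]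
  ring

theorem abs_gaussDeriv_le (ht : 0 < t) (y : ℝ) :
    |gaussDeriv t y| ≤ (√t)⁻¹ * (√t)⁻¹ * exp (-y ^ 2 / (4 * t)) := by
  have hsplit : exp (-y ^ 2 / (2 * t)) = exp (-y ^ 2 / (4 * t)) * exp (-y ^ 2 / (4 * t)) := by
    rw [← exp_add]; congr 1; ring
  rw [gaussDeriv_eq ht, abs_neg, abs_mul, abs_div, abs_of_pos ht, abs_of_nonneg (gauss_nonneg t y)]
  calc |y| / t * gauss t y ≤ |y| / t * ((√t)⁻¹ * exp (-y ^ 2 / (2 * t))) := by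
        gcongr; exact gauss_le_exp ht y
    _ = t⁻¹ * (√t)⁻¹ * exp (-y ^ 2 / (4 * t)) * (|y| * exp (-y ^ 2 / (4 * t))) := by
        rw [hsplit]; ring
    _ ≤ t⁻¹ * (√t)⁻¹ * exp (-y ^ 2 / (4 * t)) * √t := by
        gcongr; exact abs_mul_exp_neg_sq_le ht y
    _ = (√t)⁻¹ * (√t)⁻¹ * exp (-y ^ 2 / (4 * t)) := by
        rw [← mul_inv (√t), mul_self_sqrt ht.le, mul_right_comm, mul_assoc t⁻¹,
          inv_mul_cancel₀ (sqrt_pos.2 ht).ne', mul_one]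

end Gaussian

section Interlacing

variable {n : ℕ} {w w' : (Fin (n + 1) → ℝ) × (Fin n → ℝ)}

instance isAddHaarMeasure_volume_pi_prod_pi (m n : ℕ) :
    (volume : Measure ((Fin m → ℝ) × (Fin n → ℝ))).IsAddHaarMeasure :=
  Measure.prod.instIsAddHaarMeasure _ _

/-- The position of a coordinate of `(x, y)` in the interlaced order `x₁ ≤ y₁ ≤ x₂ ≤ ⋯`: counting
from `0`, the `x i` have even and the `y i` odd positions. -/
def interlacePos (n : ℕ) : Fin (n + 1) ⊕ Fin n → ℕ :=
  Sum.elim (fun i => 2 * i) fun i => 2 * i + 1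

theorem interlacePos_injective (n : ℕ) : Function.Injective (interlacePos n) := by
  rintro (i | i) (j | j) h <;> simp only [interlacePos, Sum.elim_inl, Sum.elim_inr] at h <;>
    first | omega | exact congrArg _ (Fin.ext (by omega))

/-- The pair `(x, y)` as a single vector, indexed like the rows and columns of `qKer`. -/
def coords (n : ℕ) : ((Fin (n + 1) → ℝ) × (Fin n → ℝ)) ≃ᵢ (Fin (n + 1) ⊕ Fin n → ℝ) :=
  IsometryEquiv.sumArrowIsometryEquivProdArrow.symm

@[simp]
theorem coords_inl (i : Fin (n + 1)) : coords n w (.inl i) = w.1 i := rfl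

@[simp]
theorem coords_inr (i : Fin n) : coords n w (.inr i) = w.2 i := rfl

theorem measurePreserving_coords (n : ℕ) : MeasurePreserving (coords n) :=
  volume_measurePreserving_sumPiEquivProdPi_symm fun _ : Fin (n + 1) ⊕ Fin n => ℝ

theorem coords_mem_chamber (hw : w ∈ Wint n) : coords n w ∈ chamber (interlacePos n) := by
  have hmono : Monotone w.1 := Fin.monotone_iff_le_succ.2 fun i => (hw i).1.trans (hw i).2
  rintro (i | i) (j | j) h <;>
    simp only [interlacePos, coords_inl, coords_inr, Sum.elim_inl, Sum.elim_inr] at h ⊢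
  · exact hmono (Fin.le_def.2 (by omega))
  · exact (hmono (Fin.le_def.2 (by simp; omega))).trans (hw j).1
  · exact (hw i).2.trans (hmono (Fin.le_def.2 (by simp; omega)))
  · rcases eq_or_lt_of_le (show (i : ℕ) ≤ j by omega) with hij | hij
    · rw [Fin.ext hij]
    · exact ((hw i).2.trans (hmono (Fin.le_def.2 (by simp; omega)))).trans (hw j).1

theorem preimage_coords_chamber (n : ℕ) :
    coords n ⁻¹' chamber (interlacePos n) = Wint n := by
  refine Subset.antisymm (fun w hw i => ⟨?_, ?_⟩) fun w => coords_mem_chamber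
  · exact hw (.inl i.castSucc) (.inr i) (by simp [interlacePos])
  · exact hw (.inr i) (.inl i.succ) (by simp [interlacePos])

/-- The point obtained from `w` by permuting its coordinates: the term of `σ` in the Leibniz
expansion of `qKer` is concentrated around it. -/
def permPoint (σ : Equiv.Perm (Fin (n + 1) ⊕ Fin n)) (w : (Fin (n + 1) → ℝ) × (Fin n → ℝ)) :
    (Fin (n + 1) → ℝ) × (Fin n → ℝ) :=
  (coords n).symm (coords n w ∘ σ)

@[simp]
theorem permPoint_one (w : (Fin (n + 1) → ℝ) × (Fin n → ℝ)) : permPoint 1 w = w := rfl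

@[simp]
theorem coords_permPoint (σ : Equiv.Perm (Fin (n + 1) ⊕ Fin n))
    (w : (Fin (n + 1) → ℝ) × (Fin n → ℝ)) : coords n (permPoint σ w) = coords n w ∘ σ :=
  (coords n).apply_symm_apply _

theorem continuous_permPoint (σ : Equiv.Perm (Fin (n + 1) ⊕ Fin n)) :
    Continuous (permPoint σ) := by
  have := (coords n).continuous
  exact (coords n).symm.continuous.comp (by fun_prop)

theorem norm_sub_permPoint (w w' : (Fin (n + 1) → ℝ) × (Fin n → ℝ))
    (σ : Equiv.Perm (Fin (n + 1) ⊕ Fin n)) :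
    ‖w' - permPoint σ w‖ = ‖coords n w' - coords n w ∘ σ‖ := by
  rw [← dist_eq_norm, ← dist_eq_norm, ← (coords n).dist_eq, coords_permPoint]

theorem permPoint_notMem_interior_Wint (hw : w ∈ Wint n) {σ : Equiv.Perm (Fin (n + 1) ⊕ Fin n)}
    (hσ : σ ≠ 1) : permPoint σ w ∉ interior (Wint n) := by
  rw [← preimage_coords_chamber, ← (coords n).coe_toHomeomorph, ← Homeomorph.preimage_interior]
  rw [mem_preimage, IsometryEquiv.coe_toHomeomorph, coords_permPoint]
  exact comp_perm_notMem_interior_chamber (interlacePos_injective n) (coords_mem_chamber hw) hσ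

theorem isClosed_Wint (n : ℕ) : IsClosed (Wint n) :=
  preimage_coords_chamber n ▸ (isClosed_chamber _).preimage (coords n).continuous

end Interlacing

theorem abs_prod_le_prod_mul {ι : Type*} [Fintype ι] {u s : ι → ℝ} {X : ℝ}
    (hs : ∀ a, |u a| ≤ s a) {b : ι} (hb : |u b| ≤ s b * X) :
    |∏ a, u a| ≤ (∏ a, s a) * X := by
  classical
  rw [Finset.abs_prod, ← Finset.mul_prod_erase _ _ (Finset.mem_univ b),
    ← Finset.mul_prod_erase _ s (Finset.mem_univ b), mul_right_comm]
  exact mul_le_mul hb (Finset.prod_le_prod (fun _ _ => abs_nonneg _) fun a _ => hs a)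
    (Finset.prod_nonneg fun _ _ => abs_nonneg _) ((abs_nonneg _).trans hb)

section Kernel

variable {n : ℕ} {t : ℝ} {w w' : (Fin (n + 1) → ℝ) × (Fin n → ℝ)}

/-- The matrix of which `qKer` is the determinant. -/
noncomputable def qMatrix (n : ℕ) (t : ℝ) (w w' : (Fin (n + 1) → ℝ) × (Fin n → ℝ)) :
    Matrix (Fin (n + 1) ⊕ Fin n) (Fin (n + 1) ⊕ Fin n) ℝ :=
  Matrix.fromBlocks
    (Matrix.of fun i j : Fin (n + 1) => gauss t (w'.1 j - w.1 i))
    (Matrix.of fun (i : Fin (n + 1)) (j : Fin n) =>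
      gaussCDF t (w'.2 j - w.1 i) - (if (i : ℕ) ≤ (j : ℕ) then (1 : ℝ) else 0))
    (Matrix.of fun (i : Fin n) (j : Fin (n + 1)) => gaussDeriv t (w'.1 j - w.2 i))
    (Matrix.of fun i j : Fin n => gauss t (w'.2 j - w.2 i))

theorem qKer_eq_sum_perm (t : ℝ) (w w' : (Fin (n + 1) → ℝ) × (Fin n → ℝ)) :
    qKer n t w w' =
      ∑ σ : Equiv.Perm (Fin (n + 1) ⊕ Fin n),
        (Equiv.Perm.sign σ : ℝ) * ∏ a, qMatrix n t w w' (σ a) a :=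
  Matrix.det_apply' _

theorem qMatrix_apply_self (t : ℝ) (w w' : (Fin (n + 1) → ℝ) × (Fin n → ℝ)) (a) :
    qMatrix n t w w' a a = gauss t (coords n w' a - coords n w a) := by
  cases a <;> rfl

theorem measurable_qMatrix (ht : 0 < t) (w : (Fin (n + 1) → ℝ) × (Fin n → ℝ)) (r c) :
    Measurable fun w' => qMatrix n t w w' r c := by
  have hg : Measurable (gauss t) := by unfold gauss; fun_prop
  have hd : Measurable (gaussDeriv t) := by unfold gaussDeriv; fun_prop
  have hc : Measurable (gaussCDF t) := by
    rw [gaussCDF_eq_cdf ht]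
    exact (monotone_cdf _).measurable
  rcases r with i | i <;> rcases c with j | j <;> simp only [qMatrix, Matrix.fromBlocks_apply₁₁,
      Matrix.fromBlocks_apply₁₂, Matrix.fromBlocks_apply₂₁, Matrix.fromBlocks_apply₂₂,
      Matrix.of_apply] <;> fun_prop

theorem measurable_qKer (ht : 0 < t) (w : (Fin (n + 1) → ℝ) × (Fin n → ℝ)) :
    Measurable (qKer n t w) := by
  simp only [funext (qKer_eq_sum_perm t w)]
  exact Finset.measurable_fun_sum _ fun σ _ =>
    (Finset.measurable_fun_prod _ fun a _ => measurable_qMatrix ht w (σ a) a).const_mul _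

/-- The row factor of the scale of the entries of `qMatrix`: differentiating along the rows of the
`y` coordinates costs a factor `(√t)⁻¹`. -/
noncomputable def rowScale (n : ℕ) (t : ℝ) : Fin (n + 1) ⊕ Fin n → ℝ :=
  Sum.elim (fun _ => 1) fun _ => (√t)⁻¹

/-- The column factor of the scale of the entries of `qMatrix`: integrating along the columns of the
`y'` coordinates removes the factor `(√t)⁻¹` of a density. -/
noncomputable def colScale (n : ℕ) (t : ℝ) : Fin (n + 1) ⊕ Fin n → ℝ :=
  Sum.elim (fun _ => (√t)⁻¹) fun _ => 1

theorem prod_rowScale_mul_colScale (t : ℝ) (σ : Equiv.Perm (Fin (n + 1) ⊕ Fin n)) :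
    ∏ a, (rowScale n t (σ a) * colScale n t a) =
      (√t)⁻¹ ^ finrank ℝ ((Fin (n + 1) → ℝ) × (Fin n → ℝ)) := by
  rw [Finset.prod_mul_distrib, Equiv.prod_comp σ (rowScale n t)]
  simp [rowScale, colScale, pow_add, mul_comm]

theorem abs_qMatrix_le_of_orderCompatible (ht : 0 < t) {r c : Fin (n + 1) ⊕ Fin n}
    (h : OrderCompatible (interlacePos n) (coords n w) (coords n w') r c) :
    |qMatrix n t w w' r c| ≤
      rowScale n t r * colScale n t c * exp (-(coords n w' c - coords n w r) ^ 2 / (4 * t)) := by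
  rcases r with i | i <;> rcases c with j | j <;>
    simp only [qMatrix, rowScale, colScale, coords_inl, coords_inr, Sum.elim_inl, Sum.elim_inr,
      one_mul, mul_one, Matrix.fromBlocks_apply₁₁, Matrix.fromBlocks_apply₁₂,
      Matrix.fromBlocks_apply₂₁, Matrix.fromBlocks_apply₂₂, Matrix.of_apply]
  · exact abs_gauss_le ht _
  · refine (abs_gaussCDF_sub_ite_le ht (fun hij => ?_) fun hij => ?_).trans
      (exp_neg_sq_div_two_mul_le ht _)
    · exact sub_nonneg.2 (h.1 (by simp only [interlacePos, Sum.elim_inl, Sum.elim_inr]; omega))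
    · exact sub_nonpos.2 (h.2 (by simp only [interlacePos, Sum.elim_inl, Sum.elim_inr]; omega))
  · exact abs_gaussDeriv_le ht _
  · exact abs_gauss_le ht _

theorem abs_qMatrix_le (ht : 0 < t) (w w' : (Fin (n + 1) → ℝ) × (Fin n → ℝ))
    (r c : Fin (n + 1) ⊕ Fin n) : |qMatrix n t w w' r c| ≤ rowScale n t r * colScale n t c := by
  have hexp : ∀ y, exp (-y ^ 2 / (4 * t)) ≤ 1 := fun y =>
    exp_le_one_iff.2 (div_nonpos_of_nonpos_of_nonneg (neg_nonpos.2 (sq_nonneg y)) (by positivity))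
  rcases r with i | i <;> rcases c with j | j <;>
    simp only [qMatrix, rowScale, colScale, Sum.elim_inl, Sum.elim_inr, one_mul, mul_one,
      Matrix.fromBlocks_apply₁₁, Matrix.fromBlocks_apply₁₂, Matrix.fromBlocks_apply₂₁,
      Matrix.fromBlocks_apply₂₂, Matrix.of_apply]
  · exact (abs_gauss_le ht _).trans (mul_le_of_le_one_right (by positivity) (hexp _))
  · exact abs_gaussCDF_sub_ite_le_one ht _ _
  · exact (abs_gaussDeriv_le ht _).trans (mul_le_of_le_one_right (by positivity) (hexp _))
  · exact (abs_gauss_le ht _).trans (mul_le_of_le_one_right (by positivity) (hexp _))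

theorem rowScale_mul_colScale_nonneg (t : ℝ) (r c : Fin (n + 1) ⊕ Fin n) :
    0 ≤ rowScale n t r * colScale n t c := by
  rcases r with i | i <;> rcases c with j | j <;>
    simp only [rowScale, colScale, Sum.elim_inl, Sum.elim_inr] <;> positivity

theorem abs_prod_qMatrix_le_of_orderCompatible (ht : 0 < t)
    {σ : Equiv.Perm (Fin (n + 1) ⊕ Fin n)} {b : Fin (n + 1) ⊕ Fin n}
    (hb : OrderCompatible (interlacePos n) (coords n w) (coords n w') (σ b) b)
    (hnorm : ‖coords n w' - coords n w ∘ σ‖ ≤ |coords n w' b - coords n w (σ b)|) :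
    |∏ a, qMatrix n t w w' (σ a) a| ≤ gaussEnvelope t (w' - permPoint σ w) := by
  rw [gaussEnvelope, ← prod_rowScale_mul_colScale t σ, norm_sub_permPoint]
  refine abs_prod_le_prod_mul (fun a => abs_qMatrix_le ht w w' (σ a) a)
    ((abs_qMatrix_le_of_orderCompatible ht hb).trans ?_)
  rw [← sq_abs (coords n w' b - _)]
  have := rowScale_mul_colScale_nonneg (n := n) t (σ b) b
  gcongr

theorem abs_prod_qMatrix_le_gaussEnvelope (ht : 0 < t) (hw : w ∈ Wint n) (hw' : w' ∈ Wint n)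
    (σ : Equiv.Perm (Fin (n + 1) ⊕ Fin n)) :
    |∏ a, qMatrix n t w w' (σ a) a| ≤ gaussEnvelope t (w' - permPoint σ w) := by
  obtain ⟨b, hb, hnorm⟩ :=
    exists_orderCompatible_norm_le (coords_mem_chamber hw) (coords_mem_chamber hw') σ
  exact abs_prod_qMatrix_le_of_orderCompatible ht hb hnorm

/-- The diagonal term of the determinant `qKer`: a product Gaussian density centred at `w`. -/
noncomputable def diagTerm (n : ℕ) (t : ℝ) (w w' : (Fin (n + 1) → ℝ) × (Fin n → ℝ)) : ℝ :=
  ∏ a, qMatrix n t w w' a a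

theorem abs_diagTerm_le_gaussEnvelope (ht : 0 < t) (w w' : (Fin (n + 1) → ℝ) × (Fin n → ℝ)) :
    |diagTerm n t w w'| ≤ gaussEnvelope t (w' - w) := by
  obtain ⟨b, hb⟩ := Finite.exists_max fun a => |coords n w' a - coords n w a|
  exact abs_prod_qMatrix_le_of_orderCompatible (σ := 1) (b := b) ht
    ⟨fun h => absurd h (lt_irrefl _), fun h => absurd h (lt_irrefl _)⟩
    ((pi_norm_le_iff_of_nonempty _).2 hb)

theorem integral_diagTerm (ht : 0 < t) (w : (Fin (n + 1) → ℝ) × (Fin n → ℝ)) :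
    ∫ w', diagTerm n t w w' = 1 := by
  have hone : ∀ c, ∫ x, gauss t (x - c) = 1 := fun c => by
    rw [integral_sub_right_eq_self (gauss t), gauss_eq_gaussianPDFReal ht,
      integral_gaussianPDFReal_eq_one 0 (Real.toNNReal_pos.2 ht).ne']
  simp only [diagTerm, qMatrix_apply_self]
  calc ∫ w', ∏ a, gauss t (coords n w' a - coords n w a)
      = ∫ v : Fin (n + 1) ⊕ Fin n → ℝ, ∏ a, gauss t (v a - coords n w a) :=
        (measurePreserving_coords n).integral_comp (coords n).toHomeomorph.measurableEmbedding
          fun v => ∏ a, gauss t (v a - coords n w a)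
    _ = 1 := by
        rw [integral_fintype_prod_volume_eq_prod fun a x => gauss t (x - coords n w a)]
        exact Finset.prod_eq_one fun a _ => hone _

theorem qKer_sub_diagTerm (t : ℝ) (w w' : (Fin (n + 1) → ℝ) × (Fin n → ℝ)) :
    qKer n t w w' - diagTerm n t w w' = ∑ σ ∈ {1}ᶜ,
      (Equiv.Perm.sign σ : ℝ) * ∏ a, qMatrix n t w w' (σ a) a := by
  rw [qKer_eq_sum_perm, sub_eq_iff_eq_add', Fintype.sum_eq_add_sum_compl 1]
  simp [diagTerm]

theorem abs_qKer_sub_diagTerm_le (ht : 0 < t) (hw : w ∈ Wint n) (hw' : w' ∈ Wint n) :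
    |qKer n t w w' - diagTerm n t w w'| ≤ ∑ σ ∈ {1}ᶜ, gaussEnvelope t (w' - permPoint σ w) := by
  rw [qKer_sub_diagTerm]
  refine (Finset.abs_sum_le_sum_abs _ _).trans (Finset.sum_le_sum fun σ _ => ?_)
  rw [abs_mul, abs_unit_intCast, one_mul]
  exact abs_prod_qMatrix_le_gaussEnvelope ht hw hw' σ

theorem integrableOn_qKer (ht : 0 < t) (hw : w ∈ Wint n) : IntegrableOn (qKer n t w) (Wint n) := by
  have hsum : Integrable fun w' => gaussEnvelope t (w' - w) +
      ∑ σ ∈ {1}ᶜ, gaussEnvelope t (w' - permPoint σ w) :=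
    ((integrable_gaussEnvelope volume ht).comp_sub_right w).add <|
      integrable_finsetSum _ fun σ _ => (integrable_gaussEnvelope volume ht).comp_sub_right _
  refine hsum.integrableOn.mono' (measurable_qKer ht w).aestronglyMeasurable <|
    (ae_restrict_iff' (isClosed_Wint n).measurableSet).2 (.of_forall fun w' hw' => ?_)
  rw [← add_sub_cancel (diagTerm n t w w') (qKer n t w w')]
  exact norm_add_le_of_le (abs_diagTerm_le_gaussEnvelope ht w w')
    (abs_qKer_sub_diagTerm_le ht hw hw')

end Kernel

section Convergence

variable {F : Type*} [NormedAddCommGroup F] [NormedSpace ℝ F] [CompleteSpace F] {n : ℕ} {B : ℝ}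
  {g : (Fin (n + 1) → ℝ) × (Fin n → ℝ) → F}

theorem norm_setIntegral_qKer_smul_sub_le (hg : Continuous g) (hB : ∀ w, ‖g w‖ ≤ B)
    (hg₀ : ∀ w ∉ interior (Wint n), g w = 0) {t : ℝ} (ht : 0 < t)
    {w : (Fin (n + 1) → ℝ) × (Fin n → ℝ)} (hw : w ∈ Wint n) :
    ‖(∫ w' in Wint n, qKer n t w w' • g w') - g w‖ ≤
      ∑ σ, gaussOsc volume g t (permPoint σ w) := by
  rw [Fintype.sum_eq_add_sum_compl 1, permPoint_one]
  exact norm_setIntegral_smul_sub_le volume (isClosed_Wint n).measurableSet hg hB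
    (fun w' hw' => hg₀ w' fun h => hw' (interior_subset h)) ht (integrableOn_qKer ht hw)
    (integral_diagTerm ht w) (abs_diagTerm_le_gaussEnvelope ht w)
    (fun w' hw' => abs_qKer_sub_diagTerm_le ht hw hw')
    fun σ hσ => hg₀ _ (permPoint_notMem_interior_Wint hw (by simpa using hσ))

theorem tendstoUniformlyOn_setIntegral_qKer_smul (hg : Continuous g) (hB : ∀ w, ‖g w‖ ≤ B)
    (hg₀ : ∀ w ∉ interior (Wint n), g w = 0) {S : Set ((Fin (n + 1) → ℝ) × (Fin n → ℝ))}
    (hS : S ⊆ Wint n)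
    (hT : TendstoUniformlyOn (fun u w => g (w + u)) g (𝓝 0) (⋃ σ, permPoint σ '' S)) :
    TendstoUniformlyOn (fun t w => ∫ w' in Wint n, qKer n t w w' • g w') g (𝓝[>] 0) S :=
  tendstoUniformlyOn_of_norm_sub_le_sum_gaussOsc volume hg hB hT
    (fun σ _ _ hw => mem_iUnion_of_mem σ (mem_image_of_mem _ hw))
    fun _ ht _ hw => norm_setIntegral_qKer_smul_sub_le hg hB hg₀ ht (hS hw)

end Convergence

theorem stmt4_general {F : Type*} [NormedAddCommGroup F] [NormedSpace ℝ F] [CompleteSpace F]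
    (n : ℕ) (f : (Fin (n + 1) → ℝ) × (Fin n → ℝ) → F) (hf_cont : ContinuousOn f (Wint n))
    (hf_bdd : ∃ C : ℝ, ∀ w ∈ Wint n, ‖f w‖ ≤ C) (hf_bdry : ∀ w ∈ frontier (Wint n), f w = 0) :
    (∀ t : ℝ, 0 < t → ∀ w ∈ Wint n, IntegrableOn (fun w' => qKer n t w w' • f w') (Wint n)) ∧
    (∀ K : Set ((Fin (n + 1) → ℝ) × (Fin n → ℝ)), IsCompact K → K ⊆ Wint n →
      TendstoUniformlyOn (fun (t : ℝ) w => ∫ w' in Wint n, qKer n t w w' • f w')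
        f (𝓝[>] 0) K) ∧
    (UniformContinuousOn f (Wint n) →
      TendstoUniformlyOn (fun (t : ℝ) w => ∫ w' in Wint n, qKer n t w w' • f w')
        f (𝓝[>] 0) (Wint n)) := by
  have hW := isClosed_Wint n
  obtain ⟨C, hC⟩ := hf_bdd
  set g := (Wint n).indicator f
  have hgf : EqOn g f (Wint n) := fun w hw => indicator_of_mem hw f
  have hqgf : ∀ t w, EqOn (fun w' => qKer n t w w' • g w') (fun w' => qKer n t w w' • f w')
      (Wint n) := fun t w w' hw' => congrArg (qKer n t w w' • ·) (hgf hw')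
  have hg : Continuous g := continuous_indicator hf_bdry (by rwa [hW.closure_eq])
  have hB : ∀ w, ‖g w‖ ≤ max C 0 := fun w => by
    by_cases hw : w ∈ Wint n
    · simpa only [g, indicator_of_mem hw] using (hC w hw).trans (le_max_left C 0)
    · simp only [g, indicator_of_notMem hw, norm_zero, le_max_right]
  have hg₀ : ∀ w ∉ interior (Wint n), g w = 0 := fun w =>
    indicator_eq_zero_of_notMem_interior hW hf_bdry
  have hconv : ∀ S ⊆ Wint n,
      TendstoUniformlyOn (fun u w => g (w + u)) g (𝓝 0) (⋃ σ, permPoint σ '' S) →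
      TendstoUniformlyOn (fun t w => ∫ w' in Wint n, qKer n t w w' • f w') f (𝓝[>] 0) S :=
    fun S hS hT => by
      simpa only [setIntegral_congr_fun hW.measurableSet (hqgf _ _)] using
        (tendstoUniformlyOn_setIntegral_qKer_smul hg hB hg₀ hS hT).congr_right (hgf.mono hS)
  refine ⟨fun t ht w hw => ?_, fun K hK hKW => ?_, fun hf => ?_⟩
  · exact IntegrableOn.congr_fun ((integrableOn_qKer ht hw).smul_bdd _ hg.aestronglyMeasurable
      (.of_forall hB)) (hqgf t w) hW.measurableSet
  · exact hconv K hKW <| tendstoUniformlyOn_comp_add_of_isCompact hg <|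
      isCompact_iUnion fun σ => hK.image (continuous_permPoint σ)
  · exact hconv _ subset_rfl <| tendstoUniformlyOn_comp_add_of_uniformContinuous <|
      uniformContinuous_indicator hW hf hf_bdry

/-- Let `f` be bounded and continuous on `W = W^{n+1,n}` and zero on a neighbourhood of the boundary
of `W`. Then `∫_W q^n_t(w,w') f(w') dw'` converges absolutely and tends to `f(w)` as `t ↓ 0`,
uniformly on compact subsets of `W`, and uniformly over all of `W` if `f` is uniformly continuous.
Only the values of `f` on `W` matter. -/
theorem stmt4 (n : ℕ) (hn : 1 ≤ n)
    (f : (Fin (n + 1) → ℝ) × (Fin n → ℝ) → ℝ)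
    (hf_cont : ContinuousOn f (Wint n)) (hf_bdd : ∃ C : ℝ, ∀ w ∈ Wint n, |f w| ≤ C)
    (hf_bdry : ∃ U : Set ((Fin (n + 1) → ℝ) × (Fin n → ℝ)),
      IsOpen U ∧ frontier (Wint n) ⊆ U ∧ ∀ w ∈ U ∩ Wint n, f w = 0) :
    (∀ t : ℝ, 0 < t → ∀ w ∈ Wint n,
      MeasureTheory.IntegrableOn (fun w' => qKer n t w w' * f w') (Wint n)) ∧
    (∀ K : Set ((Fin (n + 1) → ℝ) × (Fin n → ℝ)), IsCompact K → K ⊆ Wint n →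
      TendstoUniformlyOn (fun (t : ℝ) w => ∫ w' in Wint n, qKer n t w w' * f w')
        f (nhdsWithin (0 : ℝ) (Set.Ioi 0)) K) ∧
    (UniformContinuousOn f (Wint n) →
      TendstoUniformlyOn (fun (t : ℝ) w => ∫ w' in Wint n, qKer n t w w' * f w')
        f (nhdsWithin (0 : ℝ) (Set.Ioi 0)) (Wint n)) := by
  obtain ⟨U, -, hU, hf₀⟩ := hf_bdry
  simpa only [smul_eq_mul] using stmt4_general n f hf_cont hf_bdd fun w hw =>
    hf₀ w ⟨hU hw, (isClosed_Wint n).frontier_subset hw⟩
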